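/- Let A ∈ ℝ^{n×n}, let 1 ≤ r < n be an integer, and let B ∈ ℝ^{n×n} with rank(B) ≤ r satisfy ‖A − B‖_F² ≤ (1 + 1/(n−r))·min{‖A − X‖_F² : X ∈ ℝ^{n×n}, rank(X) ≤ r}. Then ‖A − B‖² ≤ 2·σ_{r+1}(A)², where ‖·‖ is the spectral norm. -/

import Mathlib

/-! No singular value decomposition is needed. Let `E_s` be the least squared Frobenius error of
approximating `A` in rank `≤ s`. Everything rests on the rank-one perturbation inequality
`‖M + u vᵀ‖_F² ≤ ‖M‖_F² - ‖M v‖² + ‖M v + u‖²` for `‖v‖ ≤ 1`, used twice.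

* `M = A - B`, `u = -M v`: the matrix `B + M v vᵀ` has rank `≤ r + 1`, so taking the supremum over
  `v` gives `E_{r+1} + ‖A - B‖² ≤ ‖A - B‖_F²`.
* `M = A - Y`, `u = Y v`, where `rank X ≤ r < rank Y = r + 1` and `v` is a unit vector of `ker X`
  in the row space of `Y`: the matrix `Y - Y v vᵀ` has rank `≤ r` and `A v = (A - X) v`, so
  `E_r ≤ ‖A - Y‖_F² + ‖A - X‖²`, that is, `E_r ≤ E_{r+1} + σ_{r+1}²`.

Telescoping the second bound yields `E_r ≤ (n - r) σ_{r+1}²`, and therefore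
`‖A - B‖² ≤ ‖A - B‖_F² - E_{r+1} ≤ (E_r - E_{r+1}) + E_r / (n - r) ≤ 2 σ_{r+1}²`. -/

open MeasureTheory ProbabilityTheory Matrix
open scoped ENNReal Classical

noncomputable section

/-- Squared Euclidean norm of a finitely-indexed real vector. -/
def sqNorm {ι : Type*} [Fintype ι] (x : ι → ℝ) : ℝ := ∑ i, x i ^ 2

/-- Squared Frobenius norm of a real matrix. -/
def frobSq {m n : Type*} [Fintype m] [Fintype n] (A : Matrix m n ℝ) : ℝ :=
  ∑ i, ∑ j, A i j ^ 2

/-- Spectral (ℓ₂ operator) norm of a real matrix. -/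
def specNorm {m n : Type*} [Fintype m] [Fintype n] (A : Matrix m n ℝ) : ℝ :=
  sSup ((fun x : n → ℝ => Real.sqrt (sqNorm (A.mulVec x))) '' {x | sqNorm x ≤ 1})

/-- `i`-th largest singular value (1-based), characterized via
`σ_i(A) = min {‖A − X‖ : rank X ≤ i − 1}`. -/
def singVal {m n : Type*} [Fintype m] [Fintype n] (A : Matrix m n ℝ) (i : ℕ) : ℝ :=
  sInf {c | ∃ X : Matrix m n ℝ, X.rank ≤ i - 1 ∧ c = specNorm (A - X)}

/-- Flattening of an `n × n` matrix into a vector in `ℝ^{n²}`. -/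
def vec (n : ℕ) (A : Matrix (Fin n) (Fin n) ℝ) : Fin (n * n) → ℝ :=
  fun i => A (finProdFinEquiv.symm i).1 (finProdFinEquiv.symm i).2

/-- `u ⊗ v = vec (u vᵀ) ∈ ℝ^{n²}`. -/
def tensor {n : ℕ} (u v : Fin n → ℝ) : Fin (n * n) → ℝ :=
  vec n (Matrix.of fun i j => u i * v j)

/-- Standard Gaussian measure on `ι → ℝ`. -/
def stdGaussian (ι : Type*) [Fintype ι] : Measure (ι → ℝ) :=
  Measure.pi fun _ => gaussianReal 0 1

/-- Standard Gaussian measure on `n × n` matrices (as `Fin n → Fin n → ℝ`). -/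
def stdGaussianMat (n : ℕ) : Measure (Fin n → Fin n → ℝ) :=
  Measure.pi fun _ => stdGaussian (Fin n)

/-- Query maps of a deterministic `t`-round adaptive algorithm making `k` linear
measurements per round on inputs in `ℝ^N`. -/
def QueryMaps (N k t : ℕ) : Type :=
  (j : Fin t) → (Fin (j : ℕ) → (Fin k → ℝ)) → Matrix (Fin k) (Fin N) ℝ

namespace QueryMaps

variable {N k t : ℕ}

/-- Restriction of a round-`j` history to the first `i` rounds. -/
def prefixHist {j : Fin t} (h : Fin (j : ℕ) → Fin k → ℝ) {i : Fin t}
    (hij : (i : ℕ) < (j : ℕ)) : Fin (i : ℕ) → Fin k → ℝ :=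
  fun l => h ⟨l.1, l.isLt.trans hij⟩

/-- Validity of query maps: measurability, orthonormal rows within each round, and
orthogonality across rounds along consistent histories. -/
def Valid (Q : QueryMaps N k t) : Prop :=
  (∀ (j : Fin t) (i : Fin k) (l : Fin N), Measurable fun h => Q j h i l) ∧
  (∀ (j : Fin t) (h : Fin (j : ℕ) → Fin k → ℝ), Q j h * (Q j h)ᵀ = 1) ∧
  (∀ (j i : Fin t) (hij : (i : ℕ) < (j : ℕ)) (h : Fin (j : ℕ) → Fin k → ℝ),
      Q j h * (Q i (prefixHist h hij))ᵀ = 0)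

/-- Responses of the algorithm under exact linear measurements of `a`. -/
def resp (Q : QueryMaps N k t) (a : Fin N → ℝ) (j : Fin t) : Fin k → ℝ :=
  (Q j fun i => resp Q a ⟨i.1, i.isLt.trans j.isLt⟩).mulVec a
termination_by (j : ℕ)
decreasing_by exact i.isLt

/-- Responses of the algorithm under noisy linear measurements of `a`, with fresh
per-round noise `g`. -/
def nresp (Q : QueryMaps N k t) (a : Fin N → ℝ) (g : Fin t → Fin k → ℝ) (j : Fin t) :
    Fin k → ℝ :=
  ((Q j fun i => nresp Q a g ⟨i.1, i.isLt.trans j.isLt⟩).mulVec a) + g j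
termination_by (j : ℕ)
decreasing_by exact i.isLt

/-- The `tk × N` matrix stacking all the query matrices realized along the run of the
algorithm on input `a` (exact measurements). -/
def runMat (Q : QueryMaps N k t) (a : Fin N → ℝ) : Matrix (Fin t × Fin k) (Fin N) ℝ :=
  Matrix.of fun p l =>
    Q p.1 (fun i => resp Q a ⟨i.1, i.isLt.trans p.1.isLt⟩) p.2 l

end QueryMaps

/-- Kullback–Leibler divergence, valued in `[0, ∞]`, defined with the natural
logarithm. -/
def klDiv {Ω : Type*} [MeasurableSpace Ω] (P Q : Measure Ω) : ℝ≥0∞ :=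
  if P ≪ Q ∧ Integrable (fun x => Real.log ((P.rnDeriv Q x).toReal)) P then
    ENNReal.ofReal (∫ x, Real.log ((P.rnDeriv Q x).toReal) ∂P)
  else ⊤


/-- The rank-`r` plant `Σ_{i=1}^r uᵢ vᵢᵀ` built from the rows of `U` and `V`. -/
def plant {n r : ℕ} (U V : Fin r → Fin n → ℝ) : Matrix (Fin n) (Fin n) ℝ :=
  Matrix.of fun i j => ∑ l, U l i * V l j

/-- Schatten-`p` norm (real `p`), via the singular values. -/
def schattenNorm {n : ℕ} (p : ℝ) (A : Matrix (Fin n) (Fin n) ℝ) : ℝ :=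
  (∑ i ∈ Finset.range n, singVal A (i + 1) ^ p) ^ (1 / p)

/-- Ky-Fan `p` norm: sum of the `p` largest singular values. -/
def kyFanNorm {n : ℕ} (p : ℕ) (A : Matrix (Fin n) (Fin n) ℝ) : ℝ :=
  ∑ i ∈ Finset.range p, singVal A (i + 1)

section Rank

variable {l m n K : Type*} [Field K] [Fintype n]

lemma matrix_rank_add_le (A B : Matrix m n K) : (A + B).rank ≤ A.rank + B.rank := by
  rw [Matrix.rank, Matrix.mulVecLin_add]
  exact (Submodule.finrank_mono (LinearMap.range_add_le _ _)).trans
    (Submodule.finrank_add_le_finrank_add_finrank _ _)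

lemma matrix_rank_mul_lt_right_iff [Fintype m] {A : Matrix l m K} {B : Matrix m n K} :
    (A * B).rank < B.rank ↔ ∃ x, B *ᵥ x ≠ 0 ∧ A *ᵥ (B *ᵥ x) = 0 := by
  have ker_le : LinearMap.ker B.mulVecLin ≤ LinearMap.ker (A * B).mulVecLin := by
    rw [Matrix.mulVecLin_mul]
    exact LinearMap.ker_le_ker_comp _ _
  have rank_lt_iff : (A * B).rank < B.rank ↔
      LinearMap.ker B.mulVecLin < LinearMap.ker (A * B).mulVecLin := by
    have nullity_B := B.mulVecLin.finrank_range_add_finrank_ker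
    have nullity_AB := (A * B).mulVecLin.finrank_range_add_finrank_ker
    unfold Matrix.rank
    refine ⟨fun h => lt_of_le_of_ne ker_le fun ker_eq => ?_, fun h => ?_⟩
    · rw [ker_eq] at nullity_B
      omega
    · have := Submodule.finrank_lt_finrank_of_lt h
      omega
  rw [rank_lt_iff, SetLike.lt_iff_le_and_exists, and_iff_right ker_le]
  simp [and_comm]

end Rank

section Norms

variable {ι m n : Type*} [Fintype ι] [Fintype m] [Fintype n]

lemma sqNorm_eq_dotProduct (x : ι → ℝ) : sqNorm x = x ⬝ᵥ x := by
  simp [sqNorm, dotProduct, sq]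

lemma sqNorm_eq_norm_sq (x : ι → ℝ) : sqNorm x = ‖WithLp.toLp 2 x‖ ^ 2 := by
  simp [sqNorm, EuclideanSpace.real_norm_sq_eq]

lemma sqNorm_nonneg (x : ι → ℝ) : 0 ≤ sqNorm x :=
  Finset.sum_nonneg fun _ _ => sq_nonneg _

lemma sqNorm_add (x y : ι → ℝ) : sqNorm (x + y) = sqNorm x + 2 * (x ⬝ᵥ y) + sqNorm y := by
  simp only [sqNorm_eq_dotProduct, add_dotProduct, dotProduct_add, dotProduct_comm y x]
  ring

lemma sqNorm_smul (c : ℝ) (x : ι → ℝ) : sqNorm (c • x) = c ^ 2 * sqNorm x := by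
  simp [sqNorm_eq_dotProduct, sq, mul_assoc]

lemma frobSq_nonneg (A : Matrix m n ℝ) : 0 ≤ frobSq A :=
  Finset.sum_nonneg fun i _ => sqNorm_nonneg (A i)

lemma exists_smul_sqNorm_eq_one {x : ι → ℝ} (hx : x ≠ 0) : ∃ c : ℝ, sqNorm (c • x) = 1 := by
  refine ⟨‖WithLp.toLp 2 x‖⁻¹, ?_⟩
  have norm_ne_zero : ‖WithLp.toLp 2 x‖ ≠ 0 := by simpa using hx
  rw [sqNorm_smul, sqNorm_eq_norm_sq, ← mul_pow, inv_mul_cancel₀ norm_ne_zero, one_pow]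

open scoped Matrix.Norms.L2Operator in
lemma specNorm_eq_l2_opNorm (A : Matrix m n ℝ) : specNorm A = ‖A‖ := by
  rw [Matrix.l2_opNorm_def, ← ContinuousLinearMap.sSup_unitClosedBall_eq_norm, specNorm]
  congr 1
  ext c
  simp [(WithLp.equiv 2 (n → ℝ)).symm.exists_congr_left, sqNorm_eq_norm_sq,
    Matrix.toLpLin_apply]

lemma sqNorm_mulVec_le_specNorm_sq_mul (A : Matrix m n ℝ) (x : n → ℝ) :
    sqNorm (A *ᵥ x) ≤ specNorm A ^ 2 * sqNorm x := by
  rw [sqNorm_eq_norm_sq, sqNorm_eq_norm_sq, specNorm_eq_l2_opNorm, ← mul_pow]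
  exact pow_le_pow_left₀ (norm_nonneg _) (Matrix.l2_opNorm_mulVec A (WithLp.toLp 2 x)) 2

open scoped Matrix.Norms.L2Operator in
lemma specNorm_nonneg (A : Matrix m n ℝ) : 0 ≤ specNorm A := by
  rw [specNorm_eq_l2_opNorm]
  exact norm_nonneg A

lemma specNorm_sq_le {A : Matrix m n ℝ} {c : ℝ}
    (h : ∀ x, sqNorm x ≤ 1 → sqNorm (A *ᵥ x) ≤ c) : specNorm A ^ 2 ≤ c := by
  have c_nonneg : 0 ≤ c := (sqNorm_nonneg _).trans (h 0 (by simp [sqNorm]))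
  rw [← Real.le_sqrt (specNorm_nonneg A) c_nonneg]
  refine csSup_le ⟨_, 0, by simp [sqNorm], rfl⟩ ?_
  rintro _ ⟨x, hx, rfl⟩
  exact Real.sqrt_le_sqrt (h x hx)

lemma frobSq_add_vecMulVec (A : Matrix m n ℝ) (u : m → ℝ) (v : n → ℝ) :
    frobSq (A + vecMulVec u v) = frobSq A + 2 * (A *ᵥ v ⬝ᵥ u) + sqNorm u * sqNorm v := by
  calc frobSq (A + vecMulVec u v) = ∑ i, sqNorm (A i + u i • v) := rfl
    _ = ∑ i, (sqNorm (A i) + 2 * ((A i ⬝ᵥ v) * u i) + u i ^ 2 * sqNorm v) := by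
      refine Finset.sum_congr rfl fun i _ => ?_
      rw [sqNorm_add, sqNorm_smul, dotProduct_smul, smul_eq_mul, mul_comm (u i)]
    _ = frobSq A + 2 * (A *ᵥ v ⬝ᵥ u) + sqNorm u * sqNorm v := by
      rw [Finset.sum_add_distrib, Finset.sum_add_distrib, ← Finset.mul_sum, ← Finset.sum_mul]
      rfl

lemma frobSq_add_vecMulVec_le (A : Matrix m n ℝ) (u : m → ℝ) {v : n → ℝ} (hv : sqNorm v ≤ 1) :
    frobSq (A + vecMulVec u v) ≤ frobSq A - sqNorm (A *ᵥ v) + sqNorm (A *ᵥ v + u) := by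
  rw [frobSq_add_vecMulVec, sqNorm_add]
  linarith [mul_le_of_le_one_right (sqNorm_nonneg u) hv]

end Norms

section LowRankApproximation

variable {m n : Type*} [Fintype m] [Fintype n]

/-- The least squared Frobenius error `min {‖A − X‖_F² : rank X ≤ r}` of a rank-`r` approximation,
which the Eckart–Young theorem identifies with `∑_{i > r} σᵢ(A)²`. -/
def lowRankFrobSq (A : Matrix m n ℝ) (r : ℕ) : ℝ :=
  sInf {c | ∃ X : Matrix m n ℝ, X.rank ≤ r ∧ c = frobSq (A - X)}

lemma lowRankFrobSq_le {A X : Matrix m n ℝ} {r : ℕ} (hX : X.rank ≤ r) :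
    lowRankFrobSq A r ≤ frobSq (A - X) := by
  refine csInf_le ⟨0, ?_⟩ ⟨X, hX, rfl⟩
  rintro _ ⟨X, _, rfl⟩
  exact frobSq_nonneg _

lemma le_lowRankFrobSq {A : Matrix m n ℝ} {r : ℕ} {c : ℝ}
    (h : ∀ X : Matrix m n ℝ, X.rank ≤ r → c ≤ frobSq (A - X)) : c ≤ lowRankFrobSq A r := by
  refine le_csInf ⟨_, 0, by simp, rfl⟩ ?_
  rintro _ ⟨X, hX, rfl⟩
  exact h X hX

lemma singVal_nonneg (A : Matrix m n ℝ) (i : ℕ) : 0 ≤ singVal A i := by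
  refine Real.sInf_nonneg ?_
  rintro _ ⟨X, _, rfl⟩
  exact specNorm_nonneg _

lemma singVal_antitone (A : Matrix m n ℝ) : Antitone (singVal A) := by
  intro i j hij
  refine csInf_le_csInf ⟨0, ?_⟩ ⟨_, 0, by simp, rfl⟩ ?_
  · rintro _ ⟨X, _, rfl⟩
    exact specNorm_nonneg _
  · rintro _ ⟨X, hX, rfl⟩
    exact ⟨X, by omega, rfl⟩

lemma le_singVal_succ_sq {A : Matrix m n ℝ} {r : ℕ} {c : ℝ}
    (h : ∀ X : Matrix m n ℝ, X.rank ≤ r → c ≤ specNorm (A - X) ^ 2) :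
    c ≤ singVal A (r + 1) ^ 2 := by
  rw [← Real.sqrt_le_left (singVal_nonneg _ _)]
  refine le_csInf ⟨_, 0, by simp, rfl⟩ ?_
  rintro _ ⟨X, hX, rfl⟩
  exact (Real.sqrt_le_left (specNorm_nonneg _)).2 (h X hX)

lemma exists_unit_transpose_mulVec_mem_ker {X Y : Matrix m n ℝ} (h : X.rank < Y.rank) :
    ∃ z, sqNorm (Yᵀ *ᵥ z) = 1 ∧ X *ᵥ (Yᵀ *ᵥ z) = 0 := by
  have rank_lt : (X * Yᵀ).rank < Yᵀ.rank :=
    (Matrix.rank_mul_le_left _ _).trans_lt (h.trans_eq Y.rank_transpose.symm)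
  obtain ⟨z, hYz, hXz⟩ := matrix_rank_mul_lt_right_iff.1 rank_lt
  obtain ⟨c, hc⟩ := exists_smul_sqNorm_eq_one hYz
  exact ⟨c • z, by rwa [mulVec_smul], by rw [mulVec_smul, mulVec_smul, hXz, smul_zero]⟩

lemma rank_sub_vecMulVec_lt {Y : Matrix m n ℝ} {z : m → ℝ} (hz : sqNorm (Yᵀ *ᵥ z) = 1) :
    (Y - vecMulVec (Y *ᵥ (Yᵀ *ᵥ z)) (Yᵀ *ᵥ z)).rank < Y.rank := by
  set w := Yᵀ *ᵥ z with hw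
  have factor : (Y - vecMulVec (Y *ᵥ w) w)ᵀ = (1 - vecMulVec w w) * Yᵀ := by
    rw [transpose_sub, transpose_vecMulVec, Matrix.sub_mul, Matrix.one_mul, vecMulVec_mul,
      vecMul_transpose]
  rw [← Matrix.rank_transpose, factor, ← Y.rank_transpose, matrix_rank_mul_lt_right_iff]
  refine ⟨z, ?_, ?_⟩
  · intro w_eq_zero
    simp [hw, w_eq_zero, sqNorm] at hz
  · rw [← hw, sub_mulVec, one_mulVec, vecMulVec_mulVec, ← sqNorm_eq_dotProduct, hz]
    simp

lemma lowRankFrobSq_le_frobSq_add_specNorm_sq {A X Y : Matrix m n ℝ} {r : ℕ}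
    (hX : X.rank ≤ r) (hY : Y.rank ≤ r + 1) :
    lowRankFrobSq A r ≤ frobSq (A - Y) + specNorm (A - X) ^ 2 := by
  rcases hY.lt_or_eq with hY | hY
  · exact (lowRankFrobSq_le (by omega)).trans (le_add_of_nonneg_right (sq_nonneg _))
  obtain ⟨z, hz, hXz⟩ := exists_unit_transpose_mulVec_mem_ker (X := X) (Y := Y) (by omega)
  have deflated_rank := rank_sub_vecMulVec_lt hz
  set w := Yᵀ *ᵥ z
  calc lowRankFrobSq A r ≤ frobSq (A - (Y - vecMulVec (Y *ᵥ w) w)) :=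
        lowRankFrobSq_le (by omega)
    _ = frobSq (A - Y + vecMulVec (Y *ᵥ w) w) := by rw [sub_sub_eq_add_sub, add_sub_right_comm]
    _ ≤ frobSq (A - Y) - sqNorm ((A - Y) *ᵥ w) + sqNorm ((A - Y) *ᵥ w + Y *ᵥ w) :=
        frobSq_add_vecMulVec_le _ _ hz.le
    _ ≤ frobSq (A - Y) + sqNorm ((A - X) *ᵥ w) := by
        rw [← add_mulVec, sub_add_cancel, sub_mulVec A X, hXz, sub_zero]
        linarith [sqNorm_nonneg ((A - Y) *ᵥ w)]
    _ ≤ frobSq (A - Y) + specNorm (A - X) ^ 2 := by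
        gcongr
        exact (sqNorm_mulVec_le_specNorm_sq_mul _ _).trans_eq (by rw [hz, mul_one])

lemma lowRankFrobSq_le_succ_add_singVal_sq (A : Matrix m n ℝ) (r : ℕ) :
    lowRankFrobSq A r ≤ lowRankFrobSq A (r + 1) + singVal A (r + 1) ^ 2 := by
  rw [← sub_le_iff_le_add]
  refine le_lowRankFrobSq fun Y hY => ?_
  rw [sub_le_comm]
  refine le_singVal_succ_sq fun X hX => ?_
  rw [sub_le_iff_le_add']
  exact lowRankFrobSq_le_frobSq_add_specNorm_sq hX hY

lemma lowRankFrobSq_le_mul_singVal_sq {A : Matrix m n ℝ} {r k : ℕ} (hA : A.rank ≤ r + k) :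
    lowRankFrobSq A r ≤ k * singVal A (r + 1) ^ 2 := by
  induction k generalizing r with
  | zero => simpa [frobSq] using lowRankFrobSq_le (A := A) hA
  | succ k ih =>
    have tail : lowRankFrobSq A (r + 1) ≤ k * singVal A (r + 1) ^ 2 := by
      refine (ih (by omega)).trans ?_
      gcongr
      · exact singVal_nonneg _ _
      · exact singVal_antitone A (by omega)
    push_cast
    linarith [lowRankFrobSq_le_succ_add_singVal_sq A r]

lemma lowRankFrobSq_succ_add_specNorm_sq_le {A B : Matrix m n ℝ} {r : ℕ} (hB : B.rank ≤ r) :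
    lowRankFrobSq A (r + 1) + specNorm (A - B) ^ 2 ≤ frobSq (A - B) := by
  rw [← le_sub_iff_add_le']
  refine specNorm_sq_le fun v hv => ?_
  set C := A - B
  have rank_le : (B + vecMulVec (C *ᵥ v) v).rank ≤ r + 1 :=
    (matrix_rank_add_le _ _).trans (add_le_add hB (Matrix.rank_vecMulVec_le _ _))
  have error_le :=
    calc lowRankFrobSq A (r + 1) ≤ frobSq (A - (B + vecMulVec (C *ᵥ v) v)) :=
          lowRankFrobSq_le rank_le
      _ = frobSq (C + vecMulVec (-(C *ᵥ v)) v) := by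
          rw [← sub_sub, neg_vecMulVec, sub_eq_add_neg]
      _ ≤ frobSq C - sqNorm (C *ᵥ v) + sqNorm (C *ᵥ v + -(C *ᵥ v)) :=
          frobSq_add_vecMulVec_le _ _ hv
      _ = frobSq C - sqNorm (C *ᵥ v) := by simp [sqNorm]
  linarith

theorem frobenius_approx_implies_spectral_general {A B : Matrix m n ℝ} {r k : ℕ} {ε : ℝ}
    (hε : 0 ≤ ε) (hA : A.rank ≤ r + k) (hB : B.rank ≤ r)
    (h : frobSq (A - B) ≤ (1 + ε) * lowRankFrobSq A r) :
    specNorm (A - B) ^ 2 ≤ (1 + ε * k) * singVal A (r + 1) ^ 2 := by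
  have upper := lowRankFrobSq_succ_add_specNorm_sq_le (A := A) hB
  have step := lowRankFrobSq_le_succ_add_singVal_sq A r
  have tail := mul_le_mul_of_nonneg_left (lowRankFrobSq_le_mul_singVal_sq hA) hε
  linarith

end LowRankApproximation

/-- A `(1 + 1/(n−r))`-approximate Frobenius norm rank-`r` approximation is a
`√2`-approximate spectral norm approximation. -/
theorem frobenius_approx_implies_spectral (n r : ℕ) (hr : 1 ≤ r) (hrn : r < n)
    (A B : Matrix (Fin n) (Fin n) ℝ) (hB : B.rank ≤ r)
    (h : frobSq (A - B) ≤ (1 + 1 / ((n : ℝ) - r)) *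
        sInf {c | ∃ X : Matrix (Fin n) (Fin n) ℝ, X.rank ≤ r ∧ c = frobSq (A - X)}) :
    specNorm (A - B) ^ 2 ≤ 2 * singVal A (r + 1) ^ 2 := by
  have gap_pos : (0 : ℝ) < n - r := sub_pos.2 (Nat.cast_lt.2 hrn)
  have := frobenius_approx_implies_spectral_general (k := n - r) (one_div_pos.2 gap_pos).le
    (A.rank_le_width.trans (by omega)) hB h
  rwa [Nat.cast_sub hrn.le, one_div_mul_cancel gap_pos.ne', one_add_one_eq_two] at this

end
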